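/- arXiv:1604.03072 — 5 statements merged into one kernel-verified Lean document; each statement's English description precedes it below -/
import Mathlib

section
/- Let 𝔽_{q^n} be the degree-n extension of 𝔽_q inside 𝔽̄_q. Then the number of elements α ∈ 𝔽_{q^n} with 𝔽_q(α) = 𝔽_{q^n} (equivalently, of degree exactly n over 𝔽_q) is at least q^n/2. -/
/-!
An element `α ∈ L` that does not generate `L` has degree `d` over `F` with `d ∣ n` and `d < n`,
so `1 ≤ d ≤ m` where `m = n / 2` is the integer quotient, and `α` is a root of `X ^ (q ^ d) - X`
with `q = |F|`. Hence the number of such elements is at most `q + q ^ 2 + ⋯ + q ^ m`, which is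
at most `2 * q ^ m - 2`. Twice this is at most `q ^ n`, since `n ≥ 2 * m` and
`q ^ (2 * m) - 4 * q ^ m + 4 = (q ^ m - 2) ^ 2 ≥ 0`. So at least half of the `q ^ n` elements of
`L` generate it.
-/

theorem geom_sum_bound (q m : ℕ) (hq : 2 ≤ q) :
    ∑ d ∈ Finset.Icc 1 m, q ^ d + 2 ≤ 2 * q ^ m := by
  induction m with
  | zero => simp
  | succ k ih =>
    rw [Finset.sum_Icc_succ_top (by omega), pow_succ]
    nlinarith [Nat.mul_le_mul_left (q ^ k) hq]

theorem two_mul_geom_sum_le (q n : ℕ) (hq : 2 ≤ q) :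
    2 * ∑ d ∈ Finset.Icc 1 (n / 2), q ^ d ≤ q ^ n := by
  have h := geom_sum_bound q (n / 2) hq
  have h1 : q ^ (n / 2) * q ^ (n / 2) ≤ q ^ n := by
    rw [← pow_add]
    exact Nat.pow_le_pow_right (by omega) (by omega)
  zify at *
  nlinarith [sq_nonneg ((q : ℤ) ^ (n / 2) - 2)]

open Polynomial in
/-- A non-generating element of `L` has degree `d ≤ [L : F] / 2`, because `d` is a proper divisor
of `[L : F]`. -/
theorem mem_roots_of_adjoin_ne {F K : Type} [Field F] [Fintype F] [Field K] [Algebra F K]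
    (L : IntermediateField F K) [FiniteDimensional F L] {α : K} (hα : α ∈ L)
    (hne : IntermediateField.adjoin F {α} ≠ L) :
    ∃ d ∈ Finset.Icc 1 (Module.finrank F L / 2),
      α ∈ (X ^ (Fintype.card F ^ d) - X : K[X]).roots := by
  have hle : IntermediateField.adjoin F {α} ≤ L := by
    simpa [IntermediateField.adjoin_simple_le_iff] using hα
  have hfin : FiniteDimensional F (IntermediateField.adjoin F {α}) :=
    FiniteDimensional.of_injective (IntermediateField.inclusion hle).toLinearMap
      (IntermediateField.inclusion hle).injective
  set d := Module.finrank F (IntermediateField.adjoin F {α}) with hd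
  have hpos : 0 < d := Module.finrank_pos
  have hdvd : d ∣ Module.finrank F L := IntermediateField.finrank_dvd_of_le_right hle
  have hdne : d ≠ Module.finrank F L := fun h =>
    hne (IntermediateField.eq_of_le_of_finrank_eq hle h)
  have hLpos : 0 < Module.finrank F L := Module.finrank_pos
  refine ⟨d, ?_, ?_⟩
  · obtain ⟨k, hk⟩ := hdvd
    have : 2 ≤ k := by
      rcases k with _ | _ | k
      · omega
      · omega
      · omega
    rw [Finset.mem_Icc]
    refine ⟨hpos, ?_⟩
    rw [Nat.le_div_iff_mul_le (by norm_num), hk]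
    exact Nat.mul_le_mul_left d this
  · have hfinite : Finite (IntermediateField.adjoin F {α}) := Module.finite_of_finite F
    have : Fintype (IntermediateField.adjoin F {α}) := Fintype.ofFinite _
    have hcard : Fintype.card (IntermediateField.adjoin F {α}) = Fintype.card F ^ d :=
      Module.card_eq_pow_finrank
    have hpow := FiniteField.pow_card
      (⟨α, IntermediateField.mem_adjoin_simple_self F α⟩ : IntermediateField.adjoin F {α})
    rw [hcard] at hpow
    have hpow' : α ^ (Fintype.card F ^ d) = α := congrArg Subtype.val hpow
    rw [mem_roots (FiniteField.X_pow_card_sub_X_ne_zero K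
      (Nat.one_lt_pow hpos.ne' Fintype.one_lt_card))]
    simp [hpow']

/-- Let `L` be the degree-`n` extension of the finite field `F` inside an
algebraic closure `K`. Then the number of `α ∈ L` with `F(α) = L` (i.e. of degree exactly `n`
over `F`) is at least `|F|^n / 2`, i.e. `|F|^n ≤ 2 · #{α ∈ L | F(α) = L}`. -/
theorem stmt_2 (F K : Type) [Field F] [Fintype F] [Field K] [Algebra F K] [IsAlgClosure F K]
    (n : ℕ) (hn : 0 < n) (L : IntermediateField F K) (hL : Module.finrank F L = n) :
    Fintype.card F ^ n ≤
      2 * Nat.card {α : K // α ∈ L ∧ IntermediateField.adjoin F {α} = L} := by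
  classical
  have hfd : FiniteDimensional F L := Module.finite_of_finrank_pos (hL ▸ hn)
  have hfinite : Finite L := Module.finite_of_finite F
  have hcardL : (L : Set K).ncard = Fintype.card F ^ n := by
    rw [← Nat.card_eq_fintype_card, ← hL]
    exact Module.natCard_eq_pow_finrank (K := F) (V := L)
  set G : Set K := {α : K | α ∈ L ∧ IntermediateField.adjoin F {α} = L} with hG
  have hGfin : G.Finite := (Set.toFinite (L : Set K)).subset fun α h => h.1
  let B : Finset K := (Finset.Icc 1 (n / 2)).biUnion fun d =>
    (Polynomial.X ^ (Fintype.card F ^ d) - Polynomial.X : Polynomial K).roots.toFinset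
  have hB : B.card ≤ ∑ d ∈ Finset.Icc 1 (n / 2), Fintype.card F ^ d := by
    refine Finset.card_biUnion_le.trans (Finset.sum_le_sum fun d hd => ?_)
    have hd1 : d ≠ 0 := by
      have := (Finset.mem_Icc.mp hd).1
      omega
    refine (Multiset.toFinset_card_le _).trans ((Polynomial.card_roots' _).trans ?_)
    rw [FiniteField.X_pow_card_sub_X_natDegree_eq K (Nat.one_lt_pow hd1 Fintype.one_lt_card)]
  have hcover : (L : Set K) ⊆ G ∪ (B : Set K) := by
    intro α hα
    by_cases h : IntermediateField.adjoin F {α} = L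
    · exact Or.inl ⟨hα, h⟩
    · obtain ⟨d, hd, hroot⟩ := mem_roots_of_adjoin_ne L hα h
      rw [hL] at hd
      exact Or.inr (Finset.mem_coe.mpr
        (Finset.mem_biUnion.mpr ⟨d, hd, Multiset.mem_toFinset.mpr hroot⟩))
  have h1 : (L : Set K).ncard ≤ G.ncard + B.card := by
    refine (Set.ncard_le_ncard hcover (hGfin.union B.finite_toSet)).trans ?_
    refine (Set.ncard_union_le _ _).trans ?_
    rw [Set.ncard_coe_finset]
  have h2 := two_mul_geom_sum_le (Fintype.card F) n Fintype.one_lt_card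
  have h3 : Nat.card {α : K // α ∈ L ∧ IntermediateField.adjoin F {α} = L} = G.ncard := rfl
  rw [h3]
  omega
end

section
/- Let α, β ∈ 𝔽̄_q have degrees m and n respectively over 𝔽_q, with gcd(m, n) = 1. Then α + β has degree mn over 𝔽_q. -/
/-!
Let `q = #F`. An element `x` of degree `d` satisfies `x ^ q ^ k = x` exactly when `d ∣ k`
(`finrank_adjoin_dvd_iff`), and `x ↦ x ^ q ^ k` is additive. Hence any
number divisible by the degrees of two of `α`, `β`, `α + β` is divisible by the degree of the third
(`finrank_adjoin_sub_dvd`, `finrank_adjoin_neg_dvd`). If `d` is the degree of `α + β`, this gives `d ∣ m * n`, `n ∣ d * m`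
and `m ∣ d * n`; coprimality of `m` and `n` then forces `d = m * n`.
-/

/-- The degree of `x` divides `k` if and only if `x` is fixed by the `k`-th iterate of the
`#F`-power Frobenius. -/
lemma finrank_adjoin_dvd_iff {F K : Type} [Field F] [Fintype F] [Field K] [Algebra F K]
    [Algebra.IsIntegral F K] (x : K) (k : ℕ) :
    Module.finrank F (IntermediateField.adjoin F {x}) ∣ k ↔ x ^ Nat.card F ^ k = x := by
  have hx : IsIntegral F x := Algebra.IsIntegral.isIntegral x
  rw [IntermediateField.adjoin.finrank hx,
    (minpoly.irreducible hx).natDegree_dvd_iff_dvd_X_pow_card_pow_sub_X,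
    minpoly.dvd_iff]
  simp [sub_eq_zero]

lemma pow_card_pow_sub {F K : Type} [Field F] [Fintype F] [Field K] [Algebra F K]
    (x y : K) (k : ℕ) :
    (x - y) ^ Nat.card F ^ k = x ^ Nat.card F ^ k - y ^ Nat.card F ^ k := by
  obtain ⟨p, hp⟩ := CharP.exists F
  obtain ⟨e, hprime, hcard⟩ := FiniteField.card F p
  have : Fact p.Prime := ⟨hprime⟩
  have : CharP K p := charP_of_injective_algebraMap (algebraMap F K).injective p
  rw [Nat.card_eq_fintype_card, hcard, ← pow_mul, sub_pow_char_pow]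

lemma finrank_adjoin_sub_dvd {F K : Type} [Field F] [Fintype F] [Field K] [Algebra F K]
    [Algebra.IsIntegral F K] {x y : K} {k : ℕ}
    (hx : Module.finrank F (IntermediateField.adjoin F {x}) ∣ k)
    (hy : Module.finrank F (IntermediateField.adjoin F {y}) ∣ k) :
    Module.finrank F (IntermediateField.adjoin F {x - y}) ∣ k := by
  rw [finrank_adjoin_dvd_iff] at *
  rw [pow_card_pow_sub (F := F), hx, hy]

lemma finrank_adjoin_neg_dvd {F K : Type} [Field F] [Fintype F] [Field K] [Algebra F K]
    [Algebra.IsIntegral F K] {x : K} {k : ℕ}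
    (hx : Module.finrank F (IntermediateField.adjoin F {x}) ∣ k) :
    Module.finrank F (IntermediateField.adjoin F {-x}) ∣ k := by
  have h := finrank_adjoin_sub_dvd (F := F) (x := x - x) (finrank_adjoin_sub_dvd hx hx) hx
  rwa [sub_self, zero_sub] at h

/-- Let `α, β` in an algebraic closure of the finite field `F` have degrees
`m` and `n` over `F`, with `gcd(m,n) = 1`. Then `α + β` has degree `m·n` over `F`. -/
theorem stmt_3 (F K : Type) [Field F] [Fintype F] [Field K] [Algebra F K] [IsAlgClosure F K]
    (α β : K) (m n : ℕ)
    (hα : Module.finrank F (IntermediateField.adjoin F {α}) = m)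
    (hβ : Module.finrank F (IntermediateField.adjoin F {β}) = n)
    (hmn : Nat.Coprime m n) :
    Module.finrank F (IntermediateField.adjoin F {α + β}) = m * n := by
  have : Algebra.IsAlgebraic F K := IsAlgClosure.isAlgebraic
  have hint : Algebra.IsIntegral F K := inferInstance
  generalize hd : Module.finrank F (IntermediateField.adjoin F {α + β}) = d
  apply Nat.dvd_antisymm
  · have h := finrank_adjoin_sub_dvd (F := F) (x := α) (y := -β) (k := m * n)
      (hα ▸ dvd_mul_right _ _) (finrank_adjoin_neg_dvd (hβ ▸ dvd_mul_left _ _))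
    rwa [sub_neg_eq_add, hd] at h
  · apply hmn.mul_dvd_of_dvd_of_dvd
    · have h := finrank_adjoin_sub_dvd (F := F) (x := α + β) (y := β) (k := d * n)
        (hd ▸ dvd_mul_right _ _) (hβ ▸ dvd_mul_left _ _)
      rw [add_sub_cancel_right, hα] at h
      exact hmn.dvd_of_dvd_mul_right h
    · have h := finrank_adjoin_sub_dvd (F := F) (x := α + β) (y := α) (k := d * m)
        (hd ▸ dvd_mul_right _ _) (hα ▸ dvd_mul_left _ _)
      rw [add_sub_cancel_left, hβ] at h
      exact hmn.symm.dvd_of_dvd_mul_right h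
end

section
/- Let 𝔽_q have characteristic p, let a ≥ 1 be an integer, and let α ∈ 𝔽̄_q satisfy σ^{p^{a−1}}(α) = α + 1. Then α has degree p^a over 𝔽_q, and α^p − α has degree p^{a−1} over 𝔽_q. -/
/-!
Write `σ` for the `q`-power Frobenius. The degree of `x` over `F` divides `n` exactly when
`σ ^ n x = x`, because the Frobenius of the finite field `F(x)` has order `[F(x) : F]`.

Iterating `σ ^ (p ^ (a - 1)) α = α + 1` gives `σ ^ (p ^ a) α = α + p = α`, so the degree of `α`
divides `p ^ a` but not `p ^ (a - 1)`, hence equals `p ^ a`.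

The element `β = α ^ p - α` is unchanged under `α ↦ α + 1`, so its degree is `p ^ j` with
`j ≤ a - 1`. As `σ ^ (p ^ j)` fixes `β`, the element `c = σ ^ (p ^ j) α - α` satisfies `c ^ p = c`
and is therefore fixed by `σ`; iterating, `σ ^ (p ^ (a - 1)) α = α + p ^ (a - 1 - j) * c`. If
`j < a - 1` the right-hand side is `α`, contradicting the hypothesis.
-/

/-- The degree of `x` divides `n` iff the `n`-th power of the Frobenius fixes `x`. -/
lemma finrank_adjoin_dvd_iff_pow_eq (F K : Type) [Field F] [Fintype F] [Field K] [Algebra F K]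
    [Algebra.IsAlgebraic F K] (x : K) (n : ℕ) :
    Module.finrank F (IntermediateField.adjoin F {x}) ∣ n ↔ x ^ Fintype.card F ^ n = x := by
  have hx : IsIntegral F x := Algebra.IsIntegral.isIntegral x
  have : FiniteDimensional F (IntermediateField.adjoin F {x}) :=
    IntermediateField.adjoin.finiteDimensional hx
  have : Finite (IntermediateField.adjoin F {x}) := Module.finite_of_finite F
  rw [← FiniteField.orderOf_frobeniusAlgHom F (IntermediateField.adjoin F {x}),
    orderOf_dvd_iff_pow_eq_one]
  have key : (FiniteField.frobeniusAlgHom F (IntermediateField.adjoin F {x}) ^ n)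
      (IntermediateField.AdjoinSimple.gen F x) =
      IntermediateField.AdjoinSimple.gen F x ^ Fintype.card F ^ n := by
    rw [AlgHom.coe_pow, FiniteField.coe_frobeniusAlgHom, pow_iterate]
  constructor
  · intro h
    rw [h] at key
    exact (congrArg Subtype.val key).symm
  · intro h
    apply IntermediateField.algHom_ext_of_eq_adjoin F rfl
    rintro y (rfl : y = x)
    refine key.trans (Subtype.ext ?_)
    simpa using h

/-- If `α ^ (q ^ d) = α + c` with `c` in the prime field, then iterating `k` times adds `k * c`. -/
lemma pow_card_pow_mul_eq (F K : Type) [Field F] [Fintype F] [Field K] [Algebra F K]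
    (p : ℕ) (hp : p.Prime) [CharP F p] (α c : K) (d : ℕ) (hc : c ^ p = c)
    (h : α ^ Fintype.card F ^ d = α + c) (k : ℕ) :
    α ^ Fintype.card F ^ (d * k) = α + k * c := by
  have := Fact.mk hp
  have : CharP K p := charP_of_injective_algebraMap (algebraMap F K).injective p
  obtain ⟨n, -, hq⟩ := FiniteField.card F p
  have hc' (m : ℕ) : c ^ p ^ m = c := by
    induction m with
    | zero => simp
    | succ m ih => rw [pow_succ, pow_mul, ih, hc]
  -- Natural numbers lie in the prime field, so they are fixed too.
  have hk (k m : ℕ) : (k : K) ^ p ^ m = k := by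
    rw [← iterateFrobenius_def, map_natCast]
  induction k with
  | zero => simp
  | succ k ih =>
    rw [mul_add_one, pow_add, pow_mul, ih, hq, ← pow_mul, add_pow_char_pow, mul_pow, hc', hk,
      pow_mul, ← hq, h]
    push_cast
    ring

/-- Let `F` be a finite field of characteristic `p` with `q` elements,
`K` an algebraic closure of `F` with Frobenius `σ : x ↦ x^q`, `a ≥ 1`, and `α ∈ K` with
`σ^{p^{a-1}}(α) = α + 1`.  Then `α` has degree `p^a` over `F` and `α^p - α` has degree
`p^{a-1}` over `F`. -/
theorem stmt_13 (F K : Type) [Field F] [Fintype F] [Field K] [Algebra F K] [IsAlgClosure F K]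
    (p : ℕ) (hp : p.Prime) [CharP F p]
    (a : ℕ) (ha : 1 ≤ a)
    (α : K) (hα : α ^ Fintype.card F ^ p ^ (a - 1) = α + 1) :
    Module.finrank F (IntermediateField.adjoin F {α}) = p ^ a ∧
      Module.finrank F (IntermediateField.adjoin F {α ^ p - α}) = p ^ (a - 1) := by
  have := Fact.mk hp
  have : CharP K p := charP_of_injective_algebraMap (algebraMap F K).injective p
  have : Algebra.IsAlgebraic F K := IsAlgClosure.isAlgebraic
  obtain ⟨b, rfl⟩ : ∃ b, a = b + 1 := ⟨a - 1, by omega⟩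
  rw [Nat.add_sub_cancel] at hα ⊢
  constructor
  · apply Nat.eq_prime_pow_of_dvd_least_prime_pow hp
    · rw [finrank_adjoin_dvd_iff_pow_eq, hα]
      simp
    · rw [finrank_adjoin_dvd_iff_pow_eq, pow_succ,
        pow_card_pow_mul_eq F K p hp α 1 _ (one_pow p) hα]
      simp
  · have hdvd : Module.finrank F (IntermediateField.adjoin F {α ^ p - α}) ∣ p ^ b := by
      obtain ⟨n, -, hq⟩ := FiniteField.card F p
      rw [finrank_adjoin_dvd_iff_pow_eq, hq, ← pow_mul, sub_pow_char_pow, pow_right_comm,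
        pow_mul, ← hq, hα, add_pow_char]
      simp
    obtain ⟨j, hj, hd⟩ := (Nat.dvd_prime_pow hp).1 hdvd
    rw [hd]
    rcases hj.eq_or_lt with rfl | hlt
    · rfl
    exfalso
    have hfix := (finrank_adjoin_dvd_iff_pow_eq F K (α ^ p - α) (p ^ j)).1 hd.dvd
    have hc : (α ^ Fintype.card F ^ p ^ j - α) ^ p = α ^ Fintype.card F ^ p ^ j - α := by
      obtain ⟨n, -, hq⟩ := FiniteField.card F p
      rw [hq, ← pow_mul, sub_pow_char_pow, pow_right_comm, pow_mul, ← hq] at hfix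
      rw [sub_pow_char]
      linear_combination hfix
    have hit := pow_card_pow_mul_eq F K p hp α _ (p ^ j) hc (by ring) (p ^ (b - j))
    rw [← pow_add, Nat.add_sub_cancel' hj, hα] at hit
    -- The exponent `b - j` is positive, so `p ^ (b - j)` vanishes in `K`.
    simp [Nat.sub_ne_zero_of_lt hlt] at hit
end

section
/- Let ℓ be a prime, a ≥ 1 an integer, A an abelian group, and P_λ, P_μ ∈ A elements each of order ℓ^{a+1} with ⟨P_λ⟩ ∩ ⟨P_μ⟩ = {0}. Let σ : A → A be a group homomorphism with σ(P_λ) = λ·P_λ and σ(P_μ) = μ·P_μ for integers λ, μ satisfying λ^{ℓ^a} ≡ 1 (mod ℓ^{a+1}) and μ ≢ 1 (mod ℓ). Then {Q ∈ ⟨P_λ⟩ + ⟨P_μ⟩ : σ^{ℓ^a}(Q) = Q} = ⟨P_λ⟩. -/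
/-!
On `⟨P_λ⟩` the iterate `σ^{ℓ^a}` is multiplication by `λ^{ℓ^a} ≡ 1 (mod ℓ^{a+1})`, hence the
identity. On `⟨P_μ⟩` it is multiplication by `μ^{ℓ^a}`, which is `≡ μ ≢ 1 (mod ℓ)` by Fermat's
little theorem, so `μ^{ℓ^a} - 1` is prime to `ℓ`. A fixed point `x·P_λ + y·P_μ` therefore satisfies
`y (μ^{ℓ^a} - 1)·P_μ = 0`, which forces `ℓ^{a+1} ∣ y`, that is, `y·P_μ = 0`.
-/

theorem iterate_zsmul_of_eigenvector {A : Type} [AddCommGroup A] (σ : A →+ A) (P : A) (c : ℤ)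
    (h : σ P = c • P) (n : ℕ) (x : ℤ) : (⇑σ)^[n] (x • P) = (x * c ^ n) • P := by
  induction n with
  | zero => simp
  | succ k ih =>
    rw [Function.iterate_succ_apply', ih, map_zsmul, h, smul_smul]
    congr 1
    ring

theorem pow_prime_pow_modEq (ℓ : ℕ) (hℓ : ℓ.Prime) (m : ℤ) (a : ℕ) :
    m ^ ℓ ^ a ≡ m [ZMOD (ℓ : ℤ)] := by
  haveI := Fact.mk hℓ
  rw [← ZMod.intCast_eq_intCast_iff]
  push_cast
  exact ZMod.pow_card_pow _

/-- Let `ℓ` be a prime, `a ≥ 1`, `A` an abelian group, and `P_λ, P_μ ∈ A`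
elements each of order `ℓ^{a+1}` with `⟨P_λ⟩ ∩ ⟨P_μ⟩ = {0}`.  Let `σ : A → A` be a group
homomorphism with `σ(P_λ) = λ·P_λ` and `σ(P_μ) = μ·P_μ` for integers `λ, μ` with
`λ^{ℓ^a} ≡ 1 (mod ℓ^{a+1})` and `μ ≢ 1 (mod ℓ)`.  Then
`{Q ∈ ⟨P_λ⟩ + ⟨P_μ⟩ : σ^{ℓ^a}(Q) = Q} = ⟨P_λ⟩`. -/
theorem stmt_17 (ℓ : ℕ) (hℓ : ℓ.Prime) (a : ℕ) (ha : 1 ≤ a)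
    (A : Type) [AddCommGroup A] (Pl Pm : A)
    (hPl : addOrderOf Pl = ℓ ^ (a + 1)) (hPm : addOrderOf Pm = ℓ ^ (a + 1))
    (hdisj : AddSubgroup.zmultiples Pl ⊓ AddSubgroup.zmultiples Pm = ⊥)
    (σ : A →+ A) (lam mu : ℤ)
    (hσPl : σ Pl = lam • Pl) (hσPm : σ Pm = mu • Pm)
    (hlam : lam ^ ℓ ^ a ≡ 1 [ZMOD ((ℓ : ℤ) ^ (a + 1))])
    (hmu : ¬ mu ≡ 1 [ZMOD (ℓ : ℤ)]) :
    {Q : A | Q ∈ AddSubgroup.zmultiples Pl ⊔ AddSubgroup.zmultiples Pm ∧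
        (⇑σ)^[ℓ ^ a] Q = Q} = (AddSubgroup.zmultiples Pl : Set A) := by
  have hfix : ∀ x : ℤ, (x * lam ^ ℓ ^ a) • Pl = x • Pl := by
    intro x
    rw [← sub_eq_zero, ← sub_smul, ← addOrderOf_dvd_iff_zsmul_eq_zero, hPl]
    push_cast
    have h := hlam.symm.dvd.mul_left x
    rwa [mul_sub, mul_one] at h
  have hcop : IsCoprime ((ℓ : ℤ) ^ (a + 1)) (mu ^ ℓ ^ a - 1) := by
    apply IsCoprime.pow_left
    rw [(Nat.prime_iff_prime_int.mp hℓ).coprime_iff_not_dvd]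
    intro h
    exact hmu ((pow_prime_pow_modEq ℓ hℓ mu a).symm.trans (Int.modEq_iff_dvd.mpr h).symm)
  ext Q
  simp only [Set.mem_setOf_eq, SetLike.mem_coe]
  constructor
  · rintro ⟨hQ, hσQ⟩
    obtain ⟨u, hu, v, hv, rfl⟩ := AddSubgroup.mem_sup.mp hQ
    obtain ⟨x, rfl⟩ := AddSubgroup.mem_zmultiples_iff.mp hu
    obtain ⟨y, rfl⟩ := AddSubgroup.mem_zmultiples_iff.mp hv
    rw [iterate_map_add, iterate_zsmul_of_eigenvector σ Pl lam hσPl,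
      iterate_zsmul_of_eigenvector σ Pm mu hσPm, hfix, add_right_inj, ← sub_eq_zero,
      ← sub_smul, ← addOrderOf_dvd_iff_zsmul_eq_zero, hPm] at hσQ
    push_cast at hσQ
    have hy : ((ℓ : ℤ) ^ (a + 1)) ∣ y := by
      apply hcop.dvd_of_dvd_mul_right
      rwa [mul_sub, mul_one]
    have hzero : y • Pm = 0 := by
      rw [← addOrderOf_dvd_iff_zsmul_eq_zero, hPm]
      exact_mod_cast hy
    rwa [hzero, add_zero]
  · intro hQ
    refine ⟨AddSubgroup.mem_sup_left hQ, ?_⟩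
    obtain ⟨x, rfl⟩ := AddSubgroup.mem_zmultiples_iff.mp hQ
    rw [iterate_zsmul_of_eigenvector σ Pl lam hσPl, hfix]
end

section
/- Let ℓ be an odd prime, a ≥ 1 an integer, A an abelian group, σ : A → A a group homomorphism, and P ∈ A an element of order ℓ^{a+1} with σ(P) = λ·P, where λ = 1 + γℓ for an integer γ not divisible by ℓ and λ^{ℓ^a} ≡ 1 (mod ℓ^{a+1}). Define T : A → A by T(Q) := Σ_{j=0}^{ℓ^a−1} σ^j(Q), and assume T(P) has order ℓ in A. Then for all integers z₁, z₂ not divisible by ℓ: T(z₁·P) = T(z₂·P) if and only if there exists an integer j ≥ 0 with z₂·P = σ^j(z₁·P). -/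
/-!
Since `T` is additive and `T P` has order `ℓ`, `T (z₁ • P) = T (z₂ • P)` means `z₁ ≡ z₂ (mod ℓ)`.
On the other side, `σ^j (z₁ • P) = (λ ^ j * z₁) • P`, so the right-hand condition says
`z₂ ≡ λ ^ j * z₁ (mod ℓ ^ (a + 1))` for some `j`. Because `λ ≡ 1 (mod ℓ)`, this forces
`z₁ ≡ z₂ (mod ℓ)`; conversely, `λ` generates the group of units that are `1` modulo `ℓ` in
`ℤ / ℓ ^ (a + 1)`. The latter is `exists_pow_mul_modEq`, a Hensel-type induction on the
exponent of `ℓ`, whose input is that `λ ^ ℓ ^ n - 1` has `ℓ`-adic valuation exactly `n + 1`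
(lifting the exponent, where `ℓ` odd is needed).
-/

/-- The `ℓ`-adic valuation of `(1 + γℓ) ^ ℓ ^ n - 1` is exactly `n + 1`. -/
lemma exists_pow_eq_one_add (ℓ : ℕ) (hℓ : ℓ.Prime) (hodd : Odd ℓ) (γ : ℤ)
    (hγ : ¬ (ℓ : ℤ) ∣ γ) (n : ℕ) :
    ∃ u : ℤ, (1 + γ * ℓ) ^ ℓ ^ n = 1 + (ℓ : ℤ) ^ (n + 1) * u ∧ ¬ (ℓ : ℤ) ∣ u := by
  have hp : Prime (ℓ : ℤ) := Nat.prime_iff_prime_int.mp hℓ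
  have hdvd : (ℓ : ℤ) ∣ (1 + γ * ℓ) - 1 := ⟨γ, by ring⟩
  have hndvd : ¬ (ℓ : ℤ) ∣ 1 + γ * ℓ := fun h =>
    hp.not_dvd_one ((dvd_add_left (Dvd.intro_left γ rfl)).mp h)
  have h1 : emultiplicity (ℓ : ℤ) ((1 + γ * ℓ) - 1) = ((1 : ℕ) : ℕ∞) := by
    rw [emultiplicity_eq_coe]
    refine ⟨by simp, fun ⟨c, hc⟩ => hγ ⟨c, ?_⟩⟩
    apply mul_left_cancel₀ hp.ne_zero
    linear_combination hc
  have hlte := Int.emultiplicity_pow_sub_pow hℓ hodd hdvd hndvd (ℓ ^ n)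
  have h2 : emultiplicity ℓ (ℓ ^ n) = (n : ℕ∞) :=
    emultiplicity_pow_self hℓ.ne_zero hℓ.prime.not_isUnit n
  rw [h1, h2, one_pow, ← Nat.cast_add, emultiplicity_eq_coe, add_comm 1 n] at hlte
  obtain ⟨⟨u, hu⟩, hnot⟩ := hlte
  refine ⟨u, by linear_combination hu, fun ⟨c, hc⟩ => hnot ⟨c, ?_⟩⟩
  rw [hu, hc]
  ring

/-- The powers of `1 + γℓ` act transitively on the units modulo `ℓ ^ (n + 1)` lying in a given
residue class modulo `ℓ`. -/
lemma exists_pow_mul_modEq (ℓ : ℕ) (hℓ : ℓ.Prime) (hodd : Odd ℓ) (γ : ℤ)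
    (hγ : ¬ (ℓ : ℤ) ∣ γ) (z₁ z₂ : ℤ) (hz₁ : ¬ (ℓ : ℤ) ∣ z₁) (h : (ℓ : ℤ) ∣ z₂ - z₁) (n : ℕ) :
    ∃ j : ℕ, (ℓ : ℤ) ^ (n + 1) ∣ z₂ - (1 + γ * ℓ) ^ j * z₁ := by
  have hp : Prime (ℓ : ℤ) := Nat.prime_iff_prime_int.mp hℓ
  induction n with
  | zero => exact ⟨0, by simpa using h⟩
  | succ n ih =>
    obtain ⟨j, c, hc⟩ := ih
    obtain ⟨u, hu, hun⟩ := exists_pow_eq_one_add ℓ hℓ hodd γ hγ n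
    have hndvd : ¬ (ℓ : ℤ) ∣ 1 + γ * ℓ := fun h =>
      hp.not_dvd_one ((dvd_add_left (Dvd.intro_left γ rfl)).mp h)
    have hw : ¬ (ℓ : ℤ) ∣ (1 + γ * ℓ) ^ j * z₁ * u := fun h => by
      rcases hp.dvd_or_dvd h with h | h
      · rcases hp.dvd_or_dvd h with h | h
        · exact hndvd (hp.dvd_of_dvd_pow h)
        · exact hz₁ h
      · exact hun h
    obtain ⟨r, s, hrs⟩ := (hp.coprime_iff_not_dvd).mpr hw
    -- `k ≡ c / (λ ^ j * z₁ * u) (mod ℓ)` is the correction lifting `j` to `j + ℓ ^ n * k`.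
    obtain ⟨k, hk⟩ : ∃ k : ℕ, (ℓ : ℤ) ∣ s * c - k := by
      refine ⟨((s * c) % ℓ).toNat, ?_⟩
      rw [Int.toNat_of_nonneg (Int.emod_nonneg _ hp.ne_zero)]
      exact Int.dvd_self_sub_emod
    obtain ⟨d, hd⟩ := hk
    -- First-order binomial expansion modulo the square of `ℓ ^ (n + 1) * u`.
    have hbin : ∀ (x : ℤ) (k : ℕ), x ^ 2 ∣ (1 + x) ^ k - (1 + k * x) := by
      intro x k
      induction k with
      | zero => simp
      | succ k ih =>
        obtain ⟨e, he⟩ := ih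
        refine ⟨e * (1 + x) + k, ?_⟩
        push_cast
        linear_combination (1 + x) * he
    obtain ⟨e, he⟩ := hbin ((ℓ : ℤ) ^ (n + 1) * u) k
    refine ⟨j + ℓ ^ n * k, c * r + (1 + γ * ℓ) ^ j * z₁ * u * d
      - (1 + γ * ℓ) ^ j * z₁ * (ℓ : ℤ) ^ n * u ^ 2 * e, ?_⟩
    rw [pow_add, pow_mul, hu]
    generalize (1 + γ * (ℓ : ℤ)) ^ j = L at *
    linear_combination hc - L * z₁ * he - (ℓ : ℤ) ^ (n + 1) * c * hrs
      + (ℓ : ℤ) ^ (n + 1) * L * z₁ * u * hd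

/-- Let `ℓ` be an odd prime, `a ≥ 1`, `A` an abelian group, `σ : A → A` a
group homomorphism, and `P ∈ A` of order `ℓ^{a+1}` with `σ(P) = λ·P`, where `λ = 1 + γℓ`,
`ℓ ∤ γ`, and `λ^{ℓ^a} ≡ 1 (mod ℓ^{a+1})`.  Define `T(Q) := ∑_{j=0}^{ℓ^a-1} σ^j(Q)` and
assume `T(P)` has order `ℓ`.  Then for all integers `z₁, z₂` not divisible by `ℓ`:
`T(z₁·P) = T(z₂·P)` iff there is `j ≥ 0` with `z₂·P = σ^j(z₁·P)`. -/
theorem stmt_19 (ℓ : ℕ) (hℓ : ℓ.Prime) (hodd : Odd ℓ) (a : ℕ) (ha : 1 ≤ a)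
    (A : Type) [AddCommGroup A] (σ : A →+ A) (P : A)
    (hP : addOrderOf P = ℓ ^ (a + 1))
    (γ : ℤ) (hγ : ¬ (ℓ : ℤ) ∣ γ) (lam : ℤ) (hlam : lam = 1 + γ * ℓ)
    (hσP : σ P = lam • P)
    (hlampow : lam ^ ℓ ^ a ≡ 1 [ZMOD ((ℓ : ℤ) ^ (a + 1))])
    (T : A → A) (hT : ∀ Q : A, T Q = ∑ j ∈ Finset.range (ℓ ^ a), (⇑σ)^[j] Q)
    (hTP : addOrderOf (T P) = ℓ) :
    ∀ z₁ z₂ : ℤ, ¬ (ℓ : ℤ) ∣ z₁ → ¬ (ℓ : ℤ) ∣ z₂ →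
      (T (z₁ • P) = T (z₂ • P) ↔ ∃ j : ℕ, z₂ • P = (⇑σ)^[j] (z₁ • P)) := by
  intro z₁ z₂ hz₁ _
  have hiter : ∀ (j : ℕ) (z : ℤ), (⇑σ)^[j] (z • P) = (lam ^ j * z) • P := by
    intro j z
    induction j with
    | zero => simp
    | succ j ih =>
      rw [Function.iterate_succ_apply', ih, map_zsmul, hσP, smul_smul]
      congr 1
      ring
  have hTz : ∀ z : ℤ, T (z • P) = z • T P := by
    intro z
    simp only [hT, Finset.smul_sum]
    exact Finset.sum_congr rfl fun j _ => iterate_map_zsmul σ j P z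
  have hL : T (z₁ • P) = T (z₂ • P) ↔ (ℓ : ℤ) ∣ z₂ - z₁ := by
    rw [hTz, hTz, eq_comm, ← sub_eq_zero, ← sub_smul, ← addOrderOf_dvd_iff_zsmul_eq_zero, hTP]
  have hR : ∀ j : ℕ, z₂ • P = (⇑σ)^[j] (z₁ • P) ↔
      (ℓ : ℤ) ^ (a + 1) ∣ z₂ - (1 + γ * ℓ) ^ j * z₁ := by
    intro j
    rw [hiter, ← sub_eq_zero, ← sub_smul, ← addOrderOf_dvd_iff_zsmul_eq_zero, hP, hlam]
    push_cast
    rfl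
  simp only [hL, hR]
  constructor
  · intro h
    exact exists_pow_mul_modEq ℓ hℓ hodd γ hγ z₁ z₂ hz₁ h a
  · rintro ⟨j, hj⟩
    have h1 : (ℓ : ℤ) ∣ z₂ - (1 + γ * ℓ) ^ j * z₁ := (dvd_pow_self _ a.succ_ne_zero).trans hj
    have h2 : (ℓ : ℤ) ∣ (1 + γ * ℓ) ^ j - 1 :=
      (Dvd.intro_left γ (by ring)).trans (sub_one_dvd_pow_sub_one _ j)
    have h3 := dvd_add h1 (h2.mul_right z₁)
    ring_nf at h3 ⊢
    exact h3
end
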